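/- arXiv:1407.1942 — 4 statements merged into one kernel-verified Lean document; each statement's English description precedes it below -/
import Mathlib

section
/- Let G be a group, N a normal subgroup of G, and let ρ, ρ' : G → M₅(ℂ) be group homomorphisms into invertible 5×5 complex matrices such that for every g ∈ G the matrices ρ(g) and ρ'(g) are special orthogonal, i.e. ρ(g)ᵀ · ρ(g) = I and det ρ(g) = 1, and likewise for ρ'. Assume that ρ(n) = ρ'(n) for every n ∈ N, and that N acts irreducibly via ρ, i.e. the only ℂ-linear subspaces W ⊆ ℂ⁵ with ρ(n)·W ⊆ W for all n ∈ N are W = 0 and W = ℂ⁵. Then ρ(g) = ρ'(g) for all g ∈ G. -/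
open Matrix

/-!
A matrix `T` preserving a nondegenerate bilinear form is conjugate to `(Tᵀ)⁻¹`, so `T` and `T⁻¹`
have the same characteristic polynomial. If the dimension is odd and `det T = 1`, this polynomial is
antipalindromic and hence vanishes at `1`: as in Euler's rotation theorem, `T` has a nonzero fixed
vector. For `T = (ρ g)⁻¹ * ρ' g`, which commutes with the image of the normal subgroup, the space of
fixed vectors is invariant under that image, so by irreducibility it is everything.
-/

section Ratio

variable {G H : Type*} [Group G] [Group H]

theorem commute_inv_mul_of_eqOn_normal {N : Subgroup G} (hN : N.Normal) {ρ ρ' : G →* H}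
    (hagree : ∀ n ∈ N, ρ n = ρ' n) (g : G) {n : G} (hn : n ∈ N) :
    Commute ((ρ g)⁻¹ * ρ' g) (ρ n) := by
  have hconj : ρ g * ρ n * (ρ g)⁻¹ = ρ' g * ρ n * (ρ' g)⁻¹ := by
    simpa only [map_mul, map_inv, ← hagree n hn] using hagree _ (hN.conj_mem n hn g)
  calc (ρ g)⁻¹ * ρ' g * ρ n
      = (ρ g)⁻¹ * (ρ' g * ρ n * (ρ' g)⁻¹) * ρ' g := by group
    _ = (ρ g)⁻¹ * (ρ g * ρ n * (ρ g)⁻¹) * ρ' g := by rw [hconj]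
    _ = ρ n * ((ρ g)⁻¹ * ρ' g) := by group

end Ratio

open Polynomial in
theorem eval_one_eq_zero_of_reverse_eq_neg {R : Type*} [Ring R] {p : R[X]}
    (hodd : Odd p.natDegree) (hrev : p.reverse = -p) : p.eval 1 = 0 := by
  have hcoeff : ∀ i ≤ p.natDegree, p.coeff i + p.coeff (p.natDegree - i) = 0 := fun i hi ↦ by
    rw [← revAt_le hi, ← coeff_reverse, hrev, coeff_neg, add_neg_cancel]
  simp only [eval_eq_sum_range, one_pow, mul_one]
  refine Finset.sum_involution (fun i _ ↦ p.natDegree - i) ?_ ?_ ?_ ?_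
  · exact fun i hi ↦ hcoeff i (Finset.mem_range_succ_iff.mp hi)
  · intro i _ _ hfix
    obtain ⟨k, hk⟩ := hodd
    omega
  · exact fun i _ ↦ Finset.mem_range_succ_iff.mpr (Nat.sub_le _ _)
  · exact fun i hi ↦ Nat.sub_sub_self (Finset.mem_range_succ_iff.mp hi)

section Matrices

variable {ι : Type*} [Fintype ι] [DecidableEq ι]

section BilinearForm

variable {R : Type*} [CommRing R] {B T : Matrix ι ι R}

theorem charpoly_inv_eq_charpoly_of_transpose_mul_mul_eq (hB : IsUnit B) (hT : Tᵀ * B * T = B) :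
    T⁻¹.charpoly = T.charpoly := by
  have hBinv : B⁻¹ * B = 1 := nonsing_inv_mul B ((isUnit_iff_isUnit_det B).mp hB)
  have hinv : T⁻¹ = B⁻¹ * (Tᵀ * B) := inv_eq_left_inv (by rw [mul_assoc, hT, hBinv])
  calc T⁻¹.charpoly = (Tᵀ * B * B⁻¹).charpoly := by rw [hinv, charpoly_mul_comm]
    _ = Tᵀ.charpoly := by
      rw [mul_nonsing_inv_cancel_right _ _ ((isUnit_iff_isUnit_det B).mp hB)]
    _ = T.charpoly := charpoly_transpose T

theorem det_one_sub_eq_zero_of_transpose_mul_mul_eq (hι : Odd (Fintype.card ι)) (hB : IsUnit B)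
    (hT : Tᵀ * B * T = B) (hdet : T.det = 1) : (1 - T).det = 0 := by
  nontriviality R
  have hunit : IsUnit T := (isUnit_iff_isUnit_det T).mpr (hdet ▸ isUnit_one)
  have hrev : T.charpoly.reverse = -T.charpoly := by
    rw [reverse_charpoly, ← charpoly_inv_eq_charpoly_of_transpose_mul_mul_eq hB hT,
      charpoly_inv T hunit, hdet, hι.neg_one_pow, Ring.inverse_one, map_one, mul_one, neg_one_mul,
      neg_neg]
  have heval : T.charpoly.eval 1 = 0 :=
    eval_one_eq_zero_of_reverse_eq_neg (by rwa [charpoly_natDegree_eq_dim]) hrev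
  rwa [eval_charpoly, map_one] at heval

theorem det_one_sub_inv_mul_eq_zero_of_transpose_mul_mul_eq (hι : Odd (Fintype.card ι))
    (hB : IsUnit B) {P Q : GL ι R} (hform : P.valᵀ * B * P.val = Q.valᵀ * B * Q.val)
    (hdet : P.val.det = Q.val.det) : (1 - (P⁻¹ * Q).val).det = 0 := by
  have hQ : P.val * (P⁻¹ * Q).val = Q.val := by rw [← Units.val_mul, mul_inv_cancel_left]
  have hform_ratio : (P⁻¹ * Q).valᵀ * (P.valᵀ * B * P.val) * (P⁻¹ * Q).val =
      P.valᵀ * B * P.val := by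
    calc (P⁻¹ * Q).valᵀ * (P.valᵀ * B * P.val) * (P⁻¹ * Q).val
        = (P.val * (P⁻¹ * Q).val)ᵀ * B * (P.val * (P⁻¹ * Q).val) := by
          simp only [transpose_mul, mul_assoc]
      _ = P.valᵀ * B * P.val := by rw [hQ, hform]
  have hdet_ratio : (P⁻¹ * Q).val.det = 1 := by
    have hPunit : IsUnit P.val.det := (isUnit_iff_isUnit_det _).mp P.isUnit
    exact hPunit.mul_left_cancel (by rw [← det_mul, hQ, mul_one, hdet])
  have hunit : IsUnit (P.valᵀ * B * P.val) :=
    (((isUnit_transpose _).mpr P.isUnit).mul hB).mul P.isUnit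
  exact det_one_sub_eq_zero_of_transpose_mul_mul_eq hι hunit hform_ratio hdet_ratio

end BilinearForm

section Irreducible

variable {K : Type*} [Field K]

/-- The part of Schur's lemma that holds over every field. -/
theorem eq_zero_of_commute_of_irreducible_of_det_eq_zero {S : Set (Matrix ι ι K)}
    (hirr : ∀ W : Submodule K (ι → K), (∀ M ∈ S, ∀ v ∈ W, M *ᵥ v ∈ W) → W = ⊥ ∨ W = ⊤)
    {A : Matrix ι ι K} (hcomm : ∀ M ∈ S, Commute A M) (hdet : A.det = 0) : A = 0 := by
  have hinv : ∀ M ∈ S, ∀ v ∈ LinearMap.ker A.toLin', M *ᵥ v ∈ LinearMap.ker A.toLin' := by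
    intro M hM v hv
    rw [LinearMap.mem_ker, toLin'_apply] at hv ⊢
    rw [mulVec_mulVec, (hcomm M hM).eq, ← mulVec_mulVec, hv, mulVec_zero]
  have hker : LinearMap.ker A.toLin' ≠ ⊥ := by
    obtain ⟨v, hv, hAv⟩ := exists_mulVec_eq_zero_iff.mpr hdet
    exact (Submodule.ne_bot_iff _).mpr ⟨v, hAv, hv⟩
  have htop : LinearMap.ker A.toLin' = ⊤ := (hirr _ hinv).resolve_left hker
  exact toLin'.map_eq_zero_iff.mp (LinearMap.ker_eq_top.mp htop)

theorem so5_agree_on_irreducible_normal_subgroup_general (hι : Odd (Fintype.card ι))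
    {G : Type*} [Group G] {N : Subgroup G} (hN : N.Normal) {ρ ρ' : G →* GL ι K}
    {B : Matrix ι ι K} (hB : IsUnit B)
    (hform : ∀ g : G, (ρ g).valᵀ * B * (ρ g).val = (ρ' g).valᵀ * B * (ρ' g).val)
    (hdet : ∀ g : G, (ρ g).val.det = (ρ' g).val.det)
    (hagree : ∀ n ∈ N, ρ n = ρ' n)
    (hirr : ∀ W : Submodule K (ι → K),
      (∀ n ∈ N, ∀ v ∈ W, (ρ n).val *ᵥ v ∈ W) → W = ⊥ ∨ W = ⊤)
    (g : G) : ρ g = ρ' g := by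
  have hsing : (1 - ((ρ g)⁻¹ * ρ' g).val).det = 0 :=
    det_one_sub_inv_mul_eq_zero_of_transpose_mul_mul_eq hι hB (hform g) (hdet g)
  have hcomm : ∀ n ∈ N, Commute (1 - ((ρ g)⁻¹ * ρ' g).val) (ρ n).val := fun n hn ↦
    (Commute.one_left _).sub_left (commute_inv_mul_of_eqOn_normal hN hagree g hn).units_val
  have hzero : 1 - ((ρ g)⁻¹ * ρ' g).val = 0 :=
    eq_zero_of_commute_of_irreducible_of_det_eq_zero (S := (fun n ↦ (ρ n).val) '' N)
      (fun W hW ↦ hirr W fun n hn ↦ hW _ ⟨n, hn, rfl⟩) (Set.forall_mem_image.mpr hcomm) hsing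
  exact inv_mul_eq_one.mp (Units.ext (sub_eq_zero.mp hzero).symm)

end Irreducible

end Matrices

/-- Two homomorphisms into `SO₅(ℂ)` agreeing on a normal subgroup acting
irreducibly must be equal. -/
theorem so5_agree_on_irreducible_normal_subgroup
    (G : Type*) [Group G] (N : Subgroup G) (hN : N.Normal)
    (ρ ρ' : G →* GL (Fin 5) ℂ)
    (hρSO : ∀ g : G, ((ρ g : Matrix (Fin 5) (Fin 5) ℂ))ᵀ * (ρ g : Matrix (Fin 5) (Fin 5) ℂ) = 1 ∧
      (ρ g : Matrix (Fin 5) (Fin 5) ℂ).det = 1)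
    (hρ'SO : ∀ g : G, ((ρ' g : Matrix (Fin 5) (Fin 5) ℂ))ᵀ * (ρ' g : Matrix (Fin 5) (Fin 5) ℂ) = 1 ∧
      (ρ' g : Matrix (Fin 5) (Fin 5) ℂ).det = 1)
    (hagree : ∀ n ∈ N, ρ n = ρ' n)
    (hirr : ∀ W : Submodule ℂ (Fin 5 → ℂ),
      (∀ n ∈ N, ∀ v ∈ W, (ρ n : Matrix (Fin 5) (Fin 5) ℂ).mulVec v ∈ W) → W = ⊥ ∨ W = ⊤) :
    ∀ g : G, ρ g = ρ' g :=
  so5_agree_on_irreducible_normal_subgroup_general (by decide) hN isUnit_one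
    (fun g ↦ by rw [mul_one, mul_one, (hρSO g).1, (hρ'SO g).1])
    (fun g ↦ (hρSO g).2.trans (hρ'SO g).2.symm) hagree hirr
end

section
/- Let n ≥ 1, let J be an invertible n×n complex matrix, and let G be a subgroup of GLₙ(ℂ) such that gᵀ · J · g = J for every g ∈ G, and such that G acts irreducibly on ℂⁿ (the only ℂ-linear subspaces W ⊆ ℂⁿ with g·W ⊆ W for all g ∈ G are W = 0 and W = ℂⁿ). If A ∈ GLₙ(ℂ) normalizes G, i.e. A·g·A⁻¹ ∈ G for every g ∈ G, then there exists a nonzero scalar c ∈ ℂ such that Aᵀ · J · A = c · J. -/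
open Matrix

/-!
Schur's lemma for bilinear forms: the kernel of a form preserved by a set `S` of invertible matrices
is stable under `S`, so if `S` acts irreducibly, such a form is zero or nondegenerate. Over an
algebraically closed field, any pencil `M - c • J` with `J` nondegenerate has a degenerate member;
if `S` preserves both `J` and `M`, that member vanishes and `M` is a multiple of `J`. Conjugation
by `A` maps `S` to itself, so `Aᵀ * J * A` is such an `M`.
-/

section InvariantForms

variable {ι R K : Type*} [Fintype ι] [DecidableEq ι] [CommRing R] [Field K]

/-- The module of (Gram matrices of) bilinear forms preserved by every element of `S`. -/
def invariantForms (S : Set (GL ι R)) : Submodule R (Matrix ι ι R) where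
  carrier := {M | ∀ g ∈ S, (g : Matrix ι ι R)ᵀ * M * (g : Matrix ι ι R) = M}
  add_mem' hM hN g hg := by rw [Matrix.mul_add, Matrix.add_mul, hM g hg, hN g hg]
  zero_mem' g _ := by rw [Matrix.mul_zero, Matrix.zero_mul]
  smul_mem' c M hM g hg := by rw [Matrix.mul_smul, Matrix.smul_mul, hM g hg]

/-- The set `S` of invertible matrices acts irreducibly on `ι → R`: only the trivial submodules are
stable under `S`. The zero module counts as irreducible. -/
def ActsIrreducibly (S : Set (GL ι R)) : Prop :=
  ∀ W : Submodule R (ι → R),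
    (∀ g ∈ S, ∀ v ∈ W, (g : Matrix ι ι R) *ᵥ v ∈ W) → W = ⊥ ∨ W = ⊤

theorem mulVec_mem_ker_of_mem_invariantForms {S : Set (GL ι R)} {M : Matrix ι ι R}
    (hM : M ∈ invariantForms S) {g : GL ι R} (hg : g ∈ S) {v : ι → R}
    (hv : v ∈ LinearMap.ker M.mulVecLin) :
    (g : Matrix ι ι R) *ᵥ v ∈ LinearMap.ker M.mulVecLin := by
  rw [LinearMap.mem_ker, mulVecLin_apply] at hv ⊢
  have hgT : IsUnit (g : Matrix ι ι R)ᵀ := (isUnit_transpose _).mpr g.isUnit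
  apply mulVec_injective_of_isUnit hgT
  rw [mulVec_mulVec, mulVec_mulVec, hM g hg, hv, mulVec_zero]

theorem ActsIrreducibly.eq_zero_or_isUnit {S : Set (GL ι K)} (hS : ActsIrreducibly S)
    {M : Matrix ι ι K} (hM : M ∈ invariantForms S) : M = 0 ∨ IsUnit M := by
  rcases hS (LinearMap.ker M.mulVecLin)
    fun _ hg _ hv ↦ mulVec_mem_ker_of_mem_invariantForms hM hg hv with hbot | htop
  · exact .inr (mulVec_injective_iff_isUnit.mp (LinearMap.ker_eq_bot.mp hbot))
  · refine .inl (toLin'.map_eq_zero_iff.mp ?_)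
    rwa [toLin'_apply', ← LinearMap.ker_eq_top]

theorem exists_not_isUnit_sub_smul [IsAlgClosed K] [Nonempty ι] (M : Matrix ι ι K)
    {J : Matrix ι ι K} (hJ : IsUnit J) : ∃ c : K, ¬IsUnit (M - c • J) := by
  obtain ⟨B, rfl⟩ := hJ
  obtain ⟨c, hc⟩ := spectrum.nonempty_of_isAlgClosed_of_finiteDimensional K
    (M * (↑B⁻¹ : Matrix ι ι K))
  have hfactor : M - c • (B : Matrix ι ι K) =
      (M * (↑B⁻¹ : Matrix ι ι K) - algebraMap K _ c) * (B : Matrix ι ι K) := by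
    rw [sub_mul, Units.inv_mul_cancel_right, Algebra.smul_def]
  refine ⟨c, fun h ↦ hc ?_⟩
  rw [hfactor, Units.isUnit_mul_units] at h
  exact IsUnit.sub_iff.mp h

theorem ActsIrreducibly.exists_eq_smul [IsAlgClosed K] {S : Set (GL ι K)}
    (hS : ActsIrreducibly S) {J M : Matrix ι ι K} (hJ : J ∈ invariantForms S) (hJ0 : J ≠ 0)
    (hM : M ∈ invariantForms S) : ∃ c : K, M = c • J := by
  have : Nonempty ι := not_isEmpty_iff.mp fun _ ↦ hJ0 (Subsingleton.elim _ _)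
  have hJunit : IsUnit J := (hS.eq_zero_or_isUnit hJ).resolve_left hJ0
  obtain ⟨c, hc⟩ := exists_not_isUnit_sub_smul M hJunit
  have hpencil : M - c • J ∈ invariantForms S := sub_mem hM (Submodule.smul_mem _ c hJ)
  exact ⟨c, sub_eq_zero.mp ((hS.eq_zero_or_isUnit hpencil).resolve_right hc)⟩

theorem transpose_mul_mul_mem_invariantForms {S T : Set (GL ι R)} {J : Matrix ι ι R}
    (hJ : J ∈ invariantForms T) {A : GL ι R} (hA : ∀ g ∈ S, A * g * A⁻¹ ∈ T) :
    (A : Matrix ι ι R)ᵀ * J * (A : Matrix ι ι R) ∈ invariantForms S := by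
  intro g hg
  set h : GL ι R := A * g * A⁻¹ with h_def
  have hcomm :
      (A : Matrix ι ι R) * (g : Matrix ι ι R) = (h : Matrix ι ι R) * (A : Matrix ι ι R) := by
    rw [← Units.val_mul, ← Units.val_mul, h_def, inv_mul_cancel_right]
  calc (g : Matrix ι ι R)ᵀ * ((A : Matrix ι ι R)ᵀ * J * (A : Matrix ι ι R)) * (g : Matrix ι ι R)
      = ((A : Matrix ι ι R) * (g : Matrix ι ι R))ᵀ * J *
          ((A : Matrix ι ι R) * (g : Matrix ι ι R)) := by
        simp only [transpose_mul, Matrix.mul_assoc]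
    _ = (A : Matrix ι ι R)ᵀ * ((h : Matrix ι ι R)ᵀ * J * (h : Matrix ι ι R)) *
          (A : Matrix ι ι R) := by
        simp only [hcomm, transpose_mul, Matrix.mul_assoc]
    _ = (A : Matrix ι ι R)ᵀ * J * (A : Matrix ι ι R) := by rw [hJ h (hA g hg)]

theorem normalizer_of_irreducible_preserving_form_is_similitude_general [IsAlgClosed K]
    {S : Set (GL ι K)} (hS : ActsIrreducibly S) {J : Matrix ι ι K} (hJ : J ∈ invariantForms S)
    {A : GL ι K} (hA : ∀ g ∈ S, A * g * A⁻¹ ∈ S) :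
    ∃ c : K, c ≠ 0 ∧ (A : Matrix ι ι K)ᵀ * J * (A : Matrix ι ι K) = c • J := by
  obtain rfl | hJ0 := eq_or_ne J 0
  · exact ⟨1, one_ne_zero, by simp⟩
  obtain ⟨c, hc⟩ := hS.exists_eq_smul hJ hJ0 (transpose_mul_mul_mem_invariantForms hJ hA)
  refine ⟨c, ?_, hc⟩
  rintro rfl
  have hAT : IsUnit (A : Matrix ι ι K)ᵀ := (isUnit_transpose _).mpr A.isUnit
  rw [zero_smul, A.isUnit.mul_left_eq_zero, hAT.mul_right_eq_zero] at hc
  exact hJ0 hc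

end InvariantForms

/-- The normalizer in `GLₙ(ℂ)` of an irreducible subgroup preserving a
nondegenerate bilinear form `J` lies in the similitude group of `J`. -/
theorem normalizer_of_irreducible_preserving_form_is_similitude
    (n : ℕ) (hn : 1 ≤ n) (J : Matrix (Fin n) (Fin n) ℂ) (hJ : IsUnit J)
    (G : Subgroup (GL (Fin n) ℂ))
    (hform : ∀ g ∈ G, ((g : Matrix (Fin n) (Fin n) ℂ))ᵀ * J * (g : Matrix (Fin n) (Fin n) ℂ) = J)
    (hirr : ∀ W : Submodule ℂ (Fin n → ℂ),
      (∀ g ∈ G, ∀ v ∈ W, (g : Matrix (Fin n) (Fin n) ℂ).mulVec v ∈ W) → W = ⊥ ∨ W = ⊤)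
    (A : GL (Fin n) ℂ) (hA : ∀ g ∈ G, A * g * A⁻¹ ∈ G) :
    ∃ c : ℂ, c ≠ 0 ∧
      ((A : Matrix (Fin n) (Fin n) ℂ))ᵀ * J * (A : Matrix (Fin n) (Fin n) ℂ) = c • J := by
  exact normalizer_of_irreducible_preserving_form_is_similitude_general hirr hform hA
end

section
/- Let t ∈ ℂ with t⁶ ≠ 1. If x : Fin 6 → ℂ satisfies (x i)⁵ = t · ∏_{j ≠ i} x j for every index i (where the product is over the five indices j different from i), then x = 0. -/
/-!
Multiplying the `i`-th equation by `x i` gives `x i ^ n = t * P` with `P = ∏ j, x j` and `n` the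
number of variables. The product of these equations is `P ^ n = t ^ n * P ^ n`, so `t ^ n ≠ 1`
forces `P = 0`, and then every `x i ^ n` vanishes.
-/

section CommMonoid

variable {ι M : Type*} [CommMonoid M] {s : Finset ι} {f : ι → M}

theorem pow_succ_eq_mul_prod_of_pow_eq_mul_prod_erase [DecidableEq ι] {i : ι} (hi : i ∈ s)
    {n : ℕ} {a : M} (h : f i ^ n = a * ∏ j ∈ s.erase i, f j) :
    f i ^ (n + 1) = a * ∏ j ∈ s, f j := by
  rw [pow_succ, h, mul_assoc, Finset.prod_erase_mul s f hi]

theorem prod_pow_eq_pow_card_of_forall_pow_eq {n : ℕ} {b : M} (h : ∀ i ∈ s, f i ^ n = b) :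
    (∏ i ∈ s, f i) ^ n = b ^ s.card := by
  rw [← Finset.prod_pow, Finset.prod_eq_pow_card h]

end CommMonoid

section CancelCommMonoidWithZero

variable {ι M₀ : Type*} [CommMonoidWithZero M₀] [IsCancelMulZero M₀]

theorem prod_eq_zero_of_forall_pow_card_eq_mul_prod {s : Finset ι} {f : ι → M₀} {a : M₀}
    (ha : a ^ s.card ≠ 1) (h : ∀ i ∈ s, f i ^ s.card = a * ∏ j ∈ s, f j) :
    ∏ i ∈ s, f i = 0 := by
  have hprod : a ^ s.card * (∏ i ∈ s, f i) ^ s.card = (∏ i ∈ s, f i) ^ s.card := by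
    rw [← mul_pow, prod_pow_eq_pow_card_of_forall_pow_eq h]
  exact eq_zero_of_pow_eq_zero ((mul_left_eq_self₀.mp hprod).resolve_left ha)

theorem dwork_sextic_smooth_general [Fintype ι] [DecidableEq ι] {n : ℕ}
    (hn : Fintype.card ι = n + 1) (t : M₀) (ht : t ^ (n + 1) ≠ 1) (x : ι → M₀)
    (hx : ∀ i, x i ^ n = t * ∏ j ∈ Finset.univ.erase i, x j) :
    x = 0 := by
  have hpow (i : ι) : x i ^ (n + 1) = t * ∏ j, x j :=
    pow_succ_eq_mul_prod_of_pow_eq_mul_prod_erase (Finset.mem_univ i) (hx i)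
  have hprod : ∏ j, x j = 0 := by
    rw [← hn, ← Finset.card_univ] at ht hpow
    exact prod_eq_zero_of_forall_pow_card_eq_mul_prod ht fun i _ ↦ hpow i
  funext i
  exact eq_zero_of_pow_eq_zero ((hpow i).trans (by rw [hprod, mul_zero]))

end CancelCommMonoidWithZero

/-- Jacobian criterion for smoothness of the sextic Dwork hypersurface: for
`t⁶ ≠ 1`, the only common zero of the partial derivatives is the origin. -/
theorem dwork_sextic_smooth (t : ℂ) (ht : t ^ 6 ≠ 1) (x : Fin 6 → ℂ)
    (hx : ∀ i : Fin 6, (x i) ^ 5 = t * ∏ j ∈ Finset.univ.erase i, x j) :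
    x = 0 :=
  dwork_sextic_smooth_general (Fintype.card_fin 6) t ht x hx
end

section
/- Let S be the 8×8 complex matrix with S_{jk} = 1 if j + k = 7 and S_{jk} = 0 otherwise (indices 0 ≤ j,k ≤ 7). Let ζ ∈ ℂ be a primitive 8th root of unity and let D be the diagonal 8×8 matrix with diagonal entries (ζ, ζ², ζ³, 1, 1, ζ⁻³, ζ⁻², ζ⁻¹). Then the ℂ-vector space {X ∈ M₈(ℂ) : Xᵀ·S + S·X = 0 and X·D = D·X} has dimension 4. -/
open Matrix

/-- The space of matrices `X` lying in the orthogonal Lie algebra of the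
bilinear form `S` (i.e. `Xᵀ S + S X = 0`) and commuting with `M`. -/
noncomputable def soCentralizer {n : ℕ} (S M : Matrix (Fin n) (Fin n) ℂ) :
    Submodule ℂ (Matrix (Fin n) (Fin n) ℂ) where
  carrier := {X | Xᵀ * S + S * X = 0 ∧ X * M = M * X}
  add_mem' := by
    intro a b ha hb
    obtain ⟨ha1, ha2⟩ := ha
    obtain ⟨hb1, hb2⟩ := hb
    refine ⟨?_, ?_⟩
    · have h : (a + b)ᵀ * S + S * (a + b) = (aᵀ * S + S * a) + (bᵀ * S + S * b) := by
        rw [Matrix.transpose_add]; noncomm_ring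
      rw [h, ha1, hb1, add_zero]
    · rw [Matrix.add_mul, Matrix.mul_add, ha2, hb2]
  zero_mem' := by simp
  smul_mem' := by
    intro c a ha
    obtain ⟨h1, h2⟩ := ha
    refine ⟨?_, ?_⟩
    · rw [Matrix.transpose_smul, Matrix.smul_mul, Matrix.mul_smul, ← smul_add, h1, smul_zero]
    · rw [Matrix.smul_mul, Matrix.mul_smul, h2]

/-!
When every coincidence of eigenvalues `dᵢ = dⱼ` with `i ≠ j` occurs between antidiagonal partners
`j = rev i`, a matrix commuting with `diagonal d` can be nonzero only on the diagonal and the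
antidiagonal. Relative to the antidiagonal form, the orthogonality condition reads
`X (rev k) j = -X (rev j) k`; taking `k = j` it kills the antidiagonal. What remains is the standard
Cartan subalgebra of diagonal matrices with `t (rev i) = -t i`, which are determined by the first
half of their entries. The eigenvalues at hand are the powers of `ζ` with exponents in `[-3, 3]`,
where only the exponent `0` is repeated, at the partners `3` and `4`.
-/

section MatrixEquations

variable {ι R : Type*} [Fintype ι] [DecidableEq ι]

theorem mul_diagonal_eq_diagonal_mul_iff [CommSemiring R] [IsCancelMulZero R] {d : ι → R}
    {X : Matrix ι ι R} :
    X * diagonal d = diagonal d * X ↔ ∀ i j, d i ≠ d j → X i j = 0 := by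
  rw [← Matrix.ext_iff]
  refine forall₂_congr fun i j ↦ ?_
  rw [mul_diagonal, diagonal_mul, mul_comm, mul_eq_mul_right_iff, or_iff_not_imp_left,
    eq_comm (a := d j)]

theorem transpose_mul_permMatrix_add_permMatrix_mul_eq_zero_iff [NonAssocSemiring R]
    {σ : Equiv.Perm ι} {X : Matrix ι ι R} :
    Xᵀ * σ.permMatrix R + σ.permMatrix R * X = 0 ↔ ∀ j k, X (σ.symm k) j + X (σ j) k = 0 := by
  simp [← Matrix.ext_iff, PEquiv.mul_toMatrix_toPEquiv, PEquiv.toMatrix_toPEquiv_mul]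

theorem eq_revPerm_permMatrix [Zero R] [One R] {n : ℕ} {S : Matrix (Fin n) (Fin n) R}
    (hS : ∀ j k : Fin n, S j k = if (j : ℕ) + k + 1 = n then 1 else 0) :
    S = Fin.revPerm.permMatrix R := by
  ext j k
  have antidiagonal_iff : (j : ℕ) + k + 1 = n ↔ j.rev = k := by
    rw [Fin.ext_iff, Fin.val_rev]
    omega
  simp [hS, antidiagonal_iff, PEquiv.toMatrix_apply, eq_comm]

end MatrixEquations

section RevAntisymm

variable (R : Type*) [CommRing R] (n : ℕ)

/-- The vectors `t : Fin n → R` with `t (rev i) = -t i`: the diagonals of the standard Cartan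
subalgebra of the orthogonal Lie algebra of the antidiagonal form. -/
def revAntisymm : Submodule R (Fin n → R) :=
  LinearMap.ker (LinearMap.funLeft R R Fin.rev + LinearMap.id)

/-- The first `n / 2` entries of a vector in `revAntisymm R n`, which serve as its coordinates. -/
def revAntisymmCoords : revAntisymm R n →ₗ[R] Fin (n / 2) → R :=
  (LinearMap.funLeft R R (Fin.castLE (Nat.div_le_self n 2))).domRestrict (revAntisymm R n)

variable {R n}

theorem mem_revAntisymm {t : Fin n → R} : t ∈ revAntisymm R n ↔ ∀ i, t i.rev + t i = 0 := by
  simp [revAntisymm, funext_iff]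

theorem revAntisymmCoords_apply (t : revAntisymm R n) (i : Fin (n / 2)) :
    revAntisymmCoords R n t i = t.1 (i.castLE (Nat.div_le_self n 2)) :=
  rfl

theorem revAntisymmCoords_injective [NoZeroDivisors R] [NeZero (2 : R)] :
    Function.Injective (revAntisymmCoords R n) := by
  rw [injective_iff_map_eq_zero]
  rintro ⟨t, ht⟩ hcoords
  rw [mem_revAntisymm] at ht
  have first_half (i : Fin n) (hi : (i : ℕ) < n / 2) : t i = 0 := congrFun hcoords ⟨i, hi⟩
  ext i
  change t i = 0
  rcases lt_trichotomy i i.rev with hlt | hmid | hgt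
  · exact first_half i (by rw [Fin.lt_def, Fin.val_rev] at hlt; omega)
  · have double : 2 * t i = 0 := by simpa [← hmid, two_mul] using ht i
    exact (mul_eq_zero.mp double).resolve_left two_ne_zero
  · have hrev := first_half i.rev (by rw [Fin.lt_def, Fin.val_rev] at hgt; rw [Fin.val_rev]; omega)
    simpa [hrev] using ht i

theorem revAntisymmCoords_surjective : Function.Surjective (revAntisymmCoords R n) := by
  intro v
  let extend (i : Fin n) : R := if h : (i : ℕ) < n / 2 then v ⟨i, h⟩ else 0
  let t (i : Fin n) : R := extend i - extend i.rev
  have ht : t ∈ revAntisymm R n := mem_revAntisymm.mpr fun i ↦ by simp [t]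
  refine ⟨⟨t, ht⟩, funext fun i ↦ ?_⟩
  have hrev : ¬n - (i + 1) < n / 2 := by omega
  simp [revAntisymmCoords_apply, t, extend, hrev]

theorem finrank_revAntisymm [IsDomain R] [NeZero (2 : R)] :
    Module.finrank R (revAntisymm R n) = n / 2 := by
  rw [(LinearEquiv.ofBijective (revAntisymmCoords R n)
    ⟨revAntisymmCoords_injective, revAntisymmCoords_surjective⟩).finrank_eq, Module.finrank_fin_fun]

end RevAntisymm

section Centralizer

variable {n : ℕ} {d : Fin n → ℂ}

theorem mem_soCentralizer_revPerm_diagonal {X : Matrix (Fin n) (Fin n) ℂ} :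
    X ∈ soCentralizer (Fin.revPerm.permMatrix ℂ) (diagonal d) ↔
      (∀ j k, X k.rev j + X j.rev k = 0) ∧ ∀ i j, d i ≠ d j → X i j = 0 :=
  and_congr transpose_mul_permMatrix_add_permMatrix_mul_eq_zero_iff mul_diagonal_eq_diagonal_mul_iff

theorem diagonal_mem_soCentralizer_revPerm_iff {t : Fin n → ℂ} :
    diagonal t ∈ soCentralizer (Fin.revPerm.permMatrix ℂ) (diagonal d) ↔ t ∈ revAntisymm ℂ n := by
  rw [mem_soCentralizer_revPerm_diagonal, mem_revAntisymm]
  refine ⟨fun h i ↦ by simpa using h.1 i.rev i, fun h ↦ ⟨fun j k ↦ ?_, fun i j hij ↦ ?_⟩⟩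
  · rcases eq_or_ne k.rev j with rfl | hkj
    · simpa using h k
    · have hjk : j.rev ≠ k := fun hjk ↦ hkj (Fin.rev_eq_iff.mpr hjk.symm)
      simp [hkj, hjk]
  · exact diagonal_apply_ne _ (ne_of_apply_ne d hij)

theorem isDiag_of_mem_soCentralizer_revPerm (hd : ∀ i j, d i = d j → i = j ∨ j = i.rev)
    {X : Matrix (Fin n) (Fin n) ℂ}
    (hX : X ∈ soCentralizer (Fin.revPerm.permMatrix ℂ) (diagonal d)) : X.IsDiag := by
  obtain ⟨hskew, hcomm⟩ := mem_soCentralizer_revPerm_diagonal.mp hX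
  intro i j hij
  by_cases hdij : d i = d j
  · obtain rfl : j = i.rev := (hd i j hdij).resolve_left hij
    simpa using hskew i.rev i.rev
  · exact hcomm i j hdij

theorem soCentralizer_revPerm_diagonal_eq_map (hd : ∀ i j, d i = d j → i = j ∨ j = i.rev) :
    soCentralizer (Fin.revPerm.permMatrix ℂ) (diagonal d) =
      (revAntisymm ℂ n).map (diagonalLinearMap (Fin n) ℂ ℂ) := by
  refine le_antisymm (fun X hX ↦ ?_) ?_
  · have hdiag := (isDiag_of_mem_soCentralizer_revPerm hd hX).diagonal_diag
    exact ⟨X.diag, diagonal_mem_soCentralizer_revPerm_iff.mp (hdiag.symm ▸ hX), hdiag⟩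
  · rintro _ ⟨t, ht, rfl⟩
    exact diagonal_mem_soCentralizer_revPerm_iff.mpr ht

theorem so8_centralizer_of_zeta8_dim_four_general {S : Matrix (Fin n) (Fin n) ℂ}
    (hS : ∀ j k : Fin n, S j k = if (j : ℕ) + k + 1 = n then 1 else 0)
    (hd : ∀ i j, d i = d j → i = j ∨ j = i.rev) :
    Module.finrank ℂ (soCentralizer S (diagonal d)) = n / 2 := by
  rw [eq_revPerm_permMatrix hS, soCentralizer_revPerm_diagonal_eq_map hd,
    ← (Submodule.equivMapOfInjective (diagonalLinearMap (Fin n) ℂ ℂ) diagonal_injective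
      (revAntisymm ℂ n)).finrank_eq, finrank_revAntisymm]

end Centralizer

section Eigenvalues

variable {G : Type*} [DivisionCommMonoid G] {ζ : G} {k : ℕ}

theorem zpow_inj_of_isPrimitiveRoot_of_abs_sub_lt (hζ : IsPrimitiveRoot ζ k) {a b : ℤ}
    (hab : |a - b| < k) (h : ζ ^ a = ζ ^ b) : a = b := by
  have hk : k ≠ 0 := by
    rintro rfl
    exact (abs_nonneg (a - b)).not_gt hab
  obtain ⟨u, rfl⟩ := hζ.isUnit hk
  have hu : IsPrimitiveRoot u k := IsPrimitiveRoot.coe_units_iff.mp hζ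
  have hdvd : (k : ℤ) ∣ a - b := by
    rw [← hu.zpow_eq_one_iff_dvd, _root_.zpow_sub, mul_inv_eq_one]
    exact_mod_cast h
  exact sub_eq_zero.mp (Int.eq_zero_of_abs_lt_dvd hdvd hab)

theorem eq_or_eq_rev_of_eigenvalues_eq (hζ : IsPrimitiveRoot ζ k) (hk : 6 < k) (i j : Fin 8)
    (h : ![ζ, ζ ^ 2, ζ ^ 3, 1, 1, (ζ ^ 3)⁻¹, (ζ ^ 2)⁻¹, ζ⁻¹] i =
      ![ζ, ζ ^ 2, ζ ^ 3, 1, 1, (ζ ^ 3)⁻¹, (ζ ^ 2)⁻¹, ζ⁻¹] j) :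
    i = j ∨ j = i.rev := by
  let e : Fin 8 → ℤ := ![1, 2, 3, 0, 0, -3, -2, -1]
  have eigenvalue_eq (i : Fin 8) :
      ![ζ, ζ ^ 2, ζ ^ 3, 1, 1, (ζ ^ 3)⁻¹, (ζ ^ 2)⁻¹, ζ⁻¹] i = ζ ^ e i := by
    fin_cases i <;> simp [e]
  have exponents_close : ∀ i j, |e i - e j| ≤ 6 := by decide
  have exponents_eq : ∀ i j, e i = e j → i = j ∨ j = i.rev := by decide
  rw [eigenvalue_eq, eigenvalue_eq] at h
  refine exponents_eq i j (zpow_inj_of_isPrimitiveRoot_of_abs_sub_lt hζ ?_ h)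
  have := exponents_close i j
  omega

end Eigenvalues

/-- The centralizer in `𝔰𝔬₈` of the semisimple element with eigenvalues
`ζ₈^{±1}, ζ₈^{±2}, ζ₈^{±3}, 1, 1` has dimension 4. -/
theorem so8_centralizer_of_zeta8_dim_four
    (S D : Matrix (Fin 8) (Fin 8) ℂ)
    (hS : ∀ j k : Fin 8, S j k = if (j : ℕ) + (k : ℕ) = 7 then 1 else 0)
    (ζ : ℂ) (hζ : IsPrimitiveRoot ζ 8)
    (hD : D = Matrix.diagonal
      ![ζ, ζ ^ 2, ζ ^ 3, 1, 1, (ζ ^ 3)⁻¹, (ζ ^ 2)⁻¹, ζ⁻¹]) :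
    Module.finrank ℂ (soCentralizer S D) = 4 := by
  subst hD
  exact so8_centralizer_of_zeta8_dim_four_general (by simpa using hS)
    (eq_or_eq_rev_of_eigenvalues_eq hζ (by norm_num))
end
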